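/- Let l divide k. Then the set of zeros of T_l^k in the algebraic closure of GF(2) equals { x + x^{2^l} : x ∈ GF(2^k) }. -/

import Mathlib

/-!
Write `L x = x + x ^ (2 ^ l)`. In characteristic two the sum `T l k (L x)` telescopes to
`x + x ^ (2 ^ k)` (`T_add_pow`), so `T l k (L x) = 0` exactly when `x` lies in `GF(2^k)`.
Since `L` is surjective on the algebraic closure (`exists_add_pow_eq`), every zero of `T l k` is
`L x` for some `x`, and that `x` is then in `GF(2^k)`.
-/

/-- `T l k x = ∑_{i=0}^{k/l - 1} x^(2^(l*i))`, the linearized trace-like polynomial. -/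
noncomputable def T {F : Type*} [Field F] (l k : ℕ) (x : F) : F :=
  ∑ i ∈ Finset.range (k / l), x ^ (2 ^ (l * i))

/-- The composite of `T l k` with `x ↦ x + x ^ (2 ^ l)` telescopes. -/
theorem T_add_pow {F : Type*} [Field F] [CharP F 2] {l k : ℕ} (hlk : l ∣ k) (x : F) :
    T l k (x + x ^ (2 ^ l)) = x + x ^ (2 ^ k) := by
  have key : ∀ n : ℕ, ∑ i ∈ Finset.range n, (x + x ^ (2 ^ l)) ^ (2 ^ (l * i)) =
      x + x ^ (2 ^ (l * n)) := by
    intro n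
    induction n with
    | zero => simp [CharTwo.add_self_eq_zero]
    | succ n ih =>
      rw [Finset.sum_range_succ, ih, add_pow_char_pow, ← pow_mul, ← pow_add, add_assoc,
        ← add_assoc (x ^ _) (x ^ _), CharTwo.add_self_eq_zero, zero_add, Nat.mul_succ,
        add_comm l]
  rw [T, key, Nat.mul_div_cancel' hlk]

theorem exists_add_pow_eq {F : Type*} [Field F] [IsAlgClosed F] {l : ℕ} (hl : 0 < l) (y : F) :
    ∃ x : F, x + x ^ (2 ^ l) = y := by
  have h1 : 1 < 2 ^ l := Nat.one_lt_two_pow hl.ne'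
  have hlin : (Polynomial.X - Polynomial.C y).degree < ((2 ^ l : ℕ) : WithBot ℕ) := by
    rw [Polynomial.degree_X_sub_C]
    exact_mod_cast h1
  have hdeg : (Polynomial.X ^ (2 ^ l) + (Polynomial.X - Polynomial.C y)).degree ≠ 0 := by
    rw [Polynomial.degree_add_eq_left_of_degree_lt (by rwa [Polynomial.degree_X_pow]),
      Polynomial.degree_X_pow]
    exact_mod_cast (by omega : 2 ^ l ≠ 0)
  obtain ⟨x, hx⟩ := IsAlgClosed.exists_root _ hdeg
  refine ⟨x, ?_⟩
  simp only [Polynomial.IsRoot.def, Polynomial.eval_add, Polynomial.eval_sub, Polynomial.eval_pow,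
    Polynomial.eval_X, Polynomial.eval_C] at hx
  linear_combination hx

theorem stmt_13 (l k : ℕ) (hl : 0 < l) (hk : 0 < k) (hlk : l ∣ k) :
    {x : AlgebraicClosure (ZMod 2) | T l k x = 0} =
      (fun x : AlgebraicClosure (ZMod 2) => x + x ^ (2 ^ l)) ''
        {x : AlgebraicClosure (ZMod 2) | x ^ (2 ^ k) = x} := by
  have : CharP (AlgebraicClosure (ZMod 2)) 2 := charP_of_injective_algebraMap
    (algebraMap (ZMod 2) (AlgebraicClosure (ZMod 2))).injective 2
  ext y
  simp only [Set.mem_ofPred_eq, Set.mem_image]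
  constructor
  · intro hy
    obtain ⟨x, rfl⟩ := exists_add_pow_eq hl y
    rw [T_add_pow hlk, CharTwo.add_eq_zero] at hy
    exact ⟨x, hy.symm, rfl⟩
  · rintro ⟨x, hx, rfl⟩
    rw [T_add_pow hlk, hx, CharTwo.add_self_eq_zero]
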